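/- Let F be a nontrivially normed field of characteristic zero, γ ∈ M_n(F) a matrix that is diagonalizable over F, M = {g ∈ GL_n(F) : gγ = γg} its centralizer in GL_n(F), and 𝔪 = {Y ∈ M_n(F) : Yγ = γY} its centralizer algebra. Then the assignment sending the M-conjugacy class of a nilpotent element ξ ∈ 𝔪 to the GL_n(F)-conjugacy orbit of γ + ξ is a bijection from the set of M-conjugacy classes of nilpotent elements of 𝔪 onto the set 𝒪(γ) of GL_n(F)-conjugation orbits 𝒪 in M_n(F) whose topological closure contains γ. In particular, 𝒪(γ) is finite. -/

import Mathlib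

/-- The conjugation orbit of a matrix `X` under `GL_n(F)`. -/
def conjOrbit {F : Type*} [Field F] {n : ℕ} (X : Matrix (Fin n) (Fin n) F) :
    Set (Matrix (Fin n) (Fin n) F) :=
  {Y | ∃ g : GL (Fin n) F,
    Y = (g : Matrix (Fin n) (Fin n) F) * X * ((g⁻¹ : GL (Fin n) F) : Matrix (Fin n) (Fin n) F)}

open Polynomial Matrix

/-- The powers of `X - a` below `e` form a basis of `K[X] / (X - a) ^ e`. -/
theorem exists_basis_quotient_X_sub_C_pow {K : Type*} [Field K] (a : K) (e : ℕ) :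
    ∃ b : Module.Basis (Fin e) K (K[X] ⧸ Ideal.span {(X - C a) ^ e}),
      ∀ k, b k = Ideal.Quotient.mk _ ((X - C a) ^ (k : ℕ)) := by
  set I : Ideal K[X] := Ideal.span {(X - C a) ^ e} with hI
  have hmonic : ((X - C a) ^ e).Monic := (monic_X_sub_C a).pow e
  have hrank : Module.finrank K (K[X] ⧸ I) = e := by
    rw [hI, finrank_quotient_span_eq_natDegree]
    simp
  have : Module.Finite K (K[X] ⧸ I) := hmonic.finite_quotient
  set y : K[X] ⧸ I := Ideal.Quotient.mk I (X - C a) with hy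
  have hpow (j : ℕ) : y ^ j = 0 ↔ e ≤ j := by
    rw [hy, ← map_pow, Ideal.Quotient.eq_zero_iff_mem, hI, Ideal.mem_span_singleton,
      pow_dvd_pow_iff (X_sub_C_ne_zero a) (not_isUnit_X_sub_C a)]
  have hdeg : (minpoly K y).natDegree = e := by
    obtain ⟨j, hj, hassoc⟩ := (dvd_prime_pow prime_X e).1
      (minpoly.dvd K y (p := X ^ e) (by simpa using (hpow e).2 le_rfl))
    have hmin : minpoly K y = X ^ j :=
      eq_of_monic_of_associated (minpoly.monic (.of_finite K y)) (monic_X_pow j) hassoc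
    have h0 := minpoly.aeval K y
    rw [hmin, map_pow, aeval_X, hpow] at h0
    rw [hmin, natDegree_X_pow]
    omega
  have hli : LinearIndependent K fun k : Fin e => y ^ (k : ℕ) := by
    have := linearIndependent_pow (K := K) y
    rwa [hdeg] at this
  refine ⟨basisOfLinearIndependentOfCardEqFinrank' _ hli (by simp [hrank]), fun k => ?_⟩
  simp [hy]

theorem DFinsupp.basis_apply_mk {ι R : Type*} {M : ι → Type*} [DecidableEq ι] [Semiring R]
    [∀ i, AddCommMonoid (M i)] [∀ i, Module R (M i)] {η : ι → Type*}
    (b : ∀ i, Module.Basis (η i) R (M i)) (i : ι) (k : η i) :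
    DFinsupp.basis b ⟨i, k⟩ = DFinsupp.single i (b i k) := by
  classical
  simp [DFinsupp.basis]

/-- If `p` is irreducible and `p ^ e` divides a split polynomial, then multiplication by `X` on
`K[X] / p ^ e` is a single Jordan block in a suitable basis. -/
theorem exists_jordan_basis_quotient {K : Type*} [Field K] {p q : K[X]} (hp : Irreducible p)
    (e : ℕ) (hq : q ≠ 0) (hs : q.Splits) (hpq : p ^ e ∣ q) :
    ∃ (a : K) (b : Module.Basis (Fin e) K (K[X] ⧸ Ideal.span {p ^ e})),
      ∀ k : Fin e, (X : K[X]) • b k =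
        a • b k + if h : (k : ℕ) + 1 < e then b ⟨k + 1, h⟩ else 0 := by
  rcases Nat.eq_zero_or_pos e with rfl | he
  · have : Subsingleton (K[X] ⧸ Ideal.span {p ^ 0}) := by
      rw [Ideal.Quotient.subsingleton_iff]
      simp
    exact ⟨0, Module.Basis.empty _, fun k => k.elim0⟩
  have hpd : p ∣ q := (dvd_pow_self p he.ne').trans hpq
  have hdeg : p.degree = 1 := (hs.of_dvd hq hpd).degree_eq_one_of_irreducible hp
  obtain ⟨a, ha⟩ := exists_root_of_degree_eq_one hdeg
  have hassoc : Associated (X - C a) p :=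
    ((prime_X_sub_C a).irreducible).associated_of_dvd hp (dvd_iff_isRoot.2 ha)
  have hspan : Ideal.span {p ^ e} = Ideal.span {(X - C a) ^ e} :=
    Ideal.span_singleton_eq_span_singleton.2 hassoc.symm.pow_pow
  rw [hspan]
  obtain ⟨b, hb⟩ := exists_basis_quotient_X_sub_C_pow a e
  refine ⟨a, b, fun k => ?_⟩
  have hnext : (if h : (k : ℕ) + 1 < e then b ⟨k + 1, h⟩ else 0) =
      Ideal.Quotient.mk _ ((X - C a) ^ ((k : ℕ) + 1)) := by
    split_ifs with h
    · rw [hb]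
    · rw [eq_comm, Ideal.Quotient.eq_zero_iff_mem, Ideal.mem_span_singleton]
      exact pow_dvd_pow _ (by omega)
  rw [hnext, hb]
  have hX : (X : K[X]) • (Ideal.Quotient.mk (Ideal.span {(X - C a) ^ e}) ((X - C a) ^ (k : ℕ))) =
      Ideal.Quotient.mk _ (X * (X - C a) ^ (k : ℕ)) := rfl
  have ha : a • (Ideal.Quotient.mk (Ideal.span {(X - C a) ^ e}) ((X - C a) ^ (k : ℕ))) =
      Ideal.Quotient.mk _ (C a * (X - C a) ^ (k : ℕ)) := by
    rw [← smul_eq_C_mul]; rfl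
  rw [hX, ha, ← map_add]
  congr 1
  ring

/-- **Jordan normal form**: an endomorphism annihilated by a nonzero split polynomial has a Jordan
basis. -/
theorem Module.End.exists_jordan_basis.{u, v} {K : Type u} {V : Type v} [Field K]
    [AddCommGroup V] [Module K V] [FiniteDimensional K V] (f : Module.End K V) {q : K[X]} (hq : q ≠ 0) (hs : q.Splits)
    (hf : aeval f q = 0) :
    ∃ (ι : Type u) (_ : Fintype ι) (a : ι → K) (e : ι → ℕ)
      (b : Module.Basis (Σ i, Fin (e i)) K V), ∀ i (k : Fin (e i)),
        f (b ⟨i, k⟩) = a i • b ⟨i, k⟩ +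
          if h : (k : ℕ) + 1 < e i then b ⟨i, ⟨k + 1, h⟩⟩ else 0 := by
  classical
  obtain ⟨ι, hι, p, hp, e, ⟨φ⟩⟩ := Module.equiv_directSum_of_isTorsion
    (Module.AEval.isTorsion_of_finiteDimensional K V f)
  have hann (x : Module.AEval K V f) : q • x = 0 := by
    obtain ⟨v, rfl⟩ := (Module.AEval.of K V f).surjective x
    rw [← Module.AEval.of_aeval_smul, hf, zero_smul, map_zero]
  have hdvd (i : ι) : p i ^ e i ∣ q := by
    have h : q • DirectSum.lof K[X] ι (fun i => K[X] ⧸ Ideal.span {p i ^ e i}) i 1 = 0 := by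
      rw [← φ.symm.map_eq_zero_iff, map_smul]
      exact hann _
    rw [← map_smul] at h
    have h1 : q • (1 : K[X] ⧸ Ideal.span {p i ^ e i}) = 0 :=
      (map_eq_zero_iff _ (DirectSum.of_injective i)).1 h
    rw [← Ideal.mem_span_singleton, ← Ideal.Quotient.eq_zero_iff_mem, ← h1]
    change _ = Ideal.Quotient.mk _ (q * 1)
    rw [mul_one]
  choose a b hb using fun i => exists_jordan_basis_quotient (hp i) (e i) hq hs (hdvd i)
  let ψ : (DirectSum ι fun i => K[X] ⧸ Ideal.span {p i ^ e i}) ≃ₗ[K] V :=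
    (φ.symm.restrictScalars K).trans (Module.AEval.of K V f).symm
  have hψ (x) : f (ψ x) = ψ ((X : K[X]) • x) := by
    change _ = (Module.AEval.of K V f).symm (φ.symm (X • x))
    rw [map_smul, Module.AEval.of_symm_X_smul]
    rfl
  let B := (DFinsupp.basis b).map ψ
  have hB (i k) : B ⟨i, k⟩ = ψ (DirectSum.lof K ι _ i (b i k)) := by
    rw [Module.Basis.map_apply, DFinsupp.basis_apply_mk]
    rfl
  refine ⟨ι, hι, a, e, B, fun i k => ?_⟩
  have hsm : (X : K[X]) • DirectSum.lof K ι (fun i => K[X] ⧸ Ideal.span {p i ^ e i}) i (b i k) =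
      DirectSum.lof K ι _ i ((X : K[X]) • b i k) :=
    (map_smul (DirectSum.lof K[X] ι (fun i => K[X] ⧸ Ideal.span {p i ^ e i}) i) _ _).symm
  rw [hB, hψ, hsm, hb, map_add, map_add, map_smul, map_smul]
  congr 1
  split_ifs with h
  · rw [hB]
  · simp

/-- **Jordan normal form** for matrices: a matrix annihilated by a nonzero split polynomial is
conjugate to `diagonal d + N`, where `N` has entries in `{0, 1}`, respects the level sets of `d`, and
raises a weight `w` by one. -/
theorem Matrix.exists_conj_diagonal_add_of_splits {K : Type*} [Field K] {n : ℕ}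
    (A : Matrix (Fin n) (Fin n) K) {q : K[X]} (hq : q ≠ 0) (hs : q.Splits)
    (hA : aeval A q = 0) :
    ∃ (g : GL (Fin n) K) (d : Fin n → K) (N : Matrix (Fin n) (Fin n) K) (w : Fin n → ℕ),
      A = (g : Matrix (Fin n) (Fin n) K) * (diagonal d + N) *
        ((g⁻¹ : GL (Fin n) K) : Matrix (Fin n) (Fin n) K) ∧
      (∀ i j, N i j = 0 ∨ N i j = 1) ∧
      ∀ i j, N i j ≠ 0 → w i = w j + 1 ∧ d i = d j := by
  classical
  have hf : aeval (toLinAlgEquiv' A) q = 0 := by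
    rw [aeval_algHom_apply, hA, map_zero]
  obtain ⟨ι, _, a, e, b, hb⟩ := Module.End.exists_jordan_basis (toLinAlgEquiv' A) hq hs hf
  let σ : (Σ i, Fin (e i)) ≃ Fin n := b.indexEquiv (Pi.basisFun K (Fin n))
  let B := b.reindex σ
  let N₀ : Matrix (Σ i, Fin (e i)) (Σ i, Fin (e i)) K := of fun r s =>
    if r.1 = s.1 ∧ (r.2 : ℕ) = s.2 + 1 then 1 else 0
  let N : Matrix (Fin n) (Fin n) K := N₀.submatrix σ.symm σ.symm
  let d : Fin n → K := fun s => a (σ.symm s).1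
  let G : Matrix (Fin n) (Fin n) K := of fun r s => B s r
  have hG : IsUnit G := by
    have := (Pi.basisFun K (Fin n)).invertibleToMatrix B
    exact isUnit_of_invertible ((Pi.basisFun K (Fin n)).toMatrix B)
  have hAG : A * G = G * (diagonal d + N) := by
    ext r s
    obtain ⟨⟨i, k⟩, rfl⟩ := σ.surjective s
    have h := congrFun (hb i k) r
    rw [mul_add, add_apply, mul_diagonal]
    have hl : (A * G) r (σ ⟨i, k⟩) = toLinAlgEquiv' A (b ⟨i, k⟩) r := by
      simp [mul_apply, G, B, mulVec, dotProduct]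
    have hN : (G * N) r (σ ⟨i, k⟩) =
        (if h : (k : ℕ) + 1 < e i then b ⟨i, ⟨k + 1, h⟩⟩ else 0) r := by
      rw [mul_apply, ← σ.sum_comp]
      simp only [G, N, N₀, B, submatrix_apply, of_apply, Equiv.symm_apply_apply,
        Module.Basis.reindex_apply, mul_ite, mul_one, mul_zero]
      split_ifs with hk
      · rw [Finset.sum_eq_single ⟨i, ⟨k + 1, hk⟩⟩]
        · simp
        · rintro ⟨i', k'⟩ - hne
          rw [if_neg]
          rintro ⟨rfl, h2⟩
          exact hne (by congr; exact Fin.ext h2)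
        · simp
      · refine Finset.sum_eq_zero ?_
        rintro ⟨i', k'⟩ -
        rw [if_neg]
        rintro ⟨rfl, h2⟩
        have := k'.2
        dsimp only at h2 hk this
        omega
    rw [hl, hN, h]
    simp [G, B, d, mul_comm]
  obtain ⟨g, hg⟩ := hG
  refine ⟨g, d, N, fun s => (σ.symm s).2, ?_, fun i j => ?_, fun i j hij => ?_⟩
  · rw [hg, ← hAG, ← hg, mul_assoc, Units.mul_inv, mul_one]
  · by_cases h : (σ.symm i).1 = (σ.symm j).1 ∧ ((σ.symm i).2 : ℕ) = (σ.symm j).2 + 1 <;>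
      simp [N, N₀, h]
  · have h : (σ.symm i).1 = (σ.symm j).1 ∧ ((σ.symm i).2 : ℕ) = (σ.symm j).2 + 1 := by
      by_contra h
      exact hij (by simp [N, N₀, h])
    exact ⟨h.2, congrArg a h.1⟩

theorem mem_conjOrbit_self {F : Type*} [Field F] {n : ℕ} (X : Matrix (Fin n) (Fin n) F) :
    X ∈ conjOrbit X := ⟨1, by simp⟩

theorem conjOrbit_conj {F : Type*} [Field F] {n : ℕ} (g : GL (Fin n) F)
    (X : Matrix (Fin n) (Fin n) F) :
    conjOrbit ((g : Matrix (Fin n) (Fin n) F) * X *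
      ((g⁻¹ : GL (Fin n) F) : Matrix (Fin n) (Fin n) F)) = conjOrbit X := by
  ext Y
  constructor
  · rintro ⟨h, rfl⟩
    exact ⟨h * g, by simp [mul_assoc]⟩
  · rintro ⟨h, rfl⟩
    exact ⟨h * g⁻¹, by simp [mul_assoc]⟩

theorem charpoly_eq_of_mem_closure_conjOrbit {F : Type*} [NontriviallyNormedField F] {n : ℕ}
    {X Y : Matrix (Fin n) (Fin n) F} (h : Y ∈ closure (conjOrbit X)) :
    Y.charpoly = X.charpoly := by
  refine Polynomial.funext fun x => ?_
  have hclosed : IsClosed {Z : Matrix (Fin n) (Fin n) F |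
      Z.charpoly.eval x = X.charpoly.eval x} := by
    simp only [Matrix.eval_charpoly]
    exact isClosed_eq (by fun_prop) continuous_const
  refine closure_minimal ?_ hclosed h
  rintro _ ⟨g, rfl⟩
  change _ = _
  rw [Matrix.coe_units_inv, Matrix.charpoly_units_conj]

/-- If `N` raises the weight `w` by one, conjugating by `diagonal (t ^ w)` scales `N` by `t`. -/
theorem diagonal_mem_closure_conjOrbit {F : Type*} [NontriviallyNormedField F] {n : ℕ}
    (d : Fin n → F) (N : Matrix (Fin n) (Fin n) F) (w : Fin n → ℕ)
    (hN : ∀ i j, N i j ≠ 0 → w i = w j + 1) :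
    Matrix.diagonal d ∈ closure (conjOrbit (Matrix.diagonal d + N)) := by
  have hcont : Continuous fun t : F => Matrix.diagonal d + t • N := by fun_prop
  have hmem : ∀ t ∈ ({0}ᶜ : Set F), Matrix.diagonal d + t • N ∈
      conjOrbit (Matrix.diagonal d + N) := by
    intro t ht
    have ht : t ≠ 0 := ht
    refine ⟨⟨Matrix.diagonal fun i => t ^ w i, Matrix.diagonal fun i => (t ^ w i)⁻¹, ?_, ?_⟩, ?_⟩
    · simp [ht]
    · simp [ht]
    · change _ = Matrix.diagonal (fun i => t ^ w i) * _ * Matrix.diagonal fun i => (t ^ w i)⁻¹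
      ext i j
      rw [Matrix.mul_diagonal, Matrix.diagonal_mul]
      simp only [Matrix.add_apply, Matrix.smul_apply, smul_eq_mul]
      have hd : t ^ w i * Matrix.diagonal d i j * (t ^ w j)⁻¹ = Matrix.diagonal d i j := by
        by_cases hij : i = j
        · subst hij
          field_simp
        · simp [hij]
      have hn : t ^ w i * N i j * (t ^ w j)⁻¹ = t * N i j := by
        by_cases hij : N i j = 0
        · simp [hij]
        · rw [hN i j hij, pow_succ]
          field_simp
      rw [mul_add, add_mul, hd, hn]
  simpa using map_mem_closure hcont (dense_compl_singleton (0 : F) 0) hmem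

theorem isNilpotent_of_weight_raising {F : Type*} [NontriviallyNormedField F] {n : ℕ}
    (N : Matrix (Fin n) (Fin n) F) (w : Fin n → ℕ)
    (hN : ∀ i j, N i j ≠ 0 → w i = w j + 1) : IsNilpotent N := by
  have h := charpoly_eq_of_mem_closure_conjOrbit (diagonal_mem_closure_conjOrbit 0 N w hN)
  have h0 := N.aeval_self_charpoly
  rw [Matrix.diagonal_zero', zero_add] at h
  rw [← h] at h0
  exact ⟨n, by simpa using h0⟩

theorem commute_diagonal_of_forall_eq {F : Type*} [Field F] {n : ℕ}
    (d : Fin n → F) (N : Matrix (Fin n) (Fin n) F)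
    (hN : ∀ i j, N i j ≠ 0 → d i = d j) : Commute N (Matrix.diagonal d) := by
  ext i j
  rw [Matrix.mul_diagonal, Matrix.diagonal_mul]
  by_cases h : N i j = 0
  · simp [h]
  · rw [hN i j h, mul_comm]

theorem Matrix.isSemisimple_toLinAlgEquiv'_diagonal {F : Type*} [Field F] {n : ℕ} (d : Fin n → F) :
    Module.End.IsSemisimple (toLinAlgEquiv' (diagonal d)) := by
  classical
  refine Module.End.isSemisimple_of_squarefree_aeval_eq_zero
    (p := ∏ a ∈ Finset.univ.image d, (X - C a)) ?_ ?_
  · exact (separable_prod_X_sub_C_iff'.2 fun x _ y _ h => h).squarefree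
  · rw [aeval_algHom_apply, ← diagonalAlgHom_apply F, aeval_algHom_apply]
    have : aeval d (∏ a ∈ Finset.univ.image d, (X - C a)) = 0 := by
      ext i
      rw [Polynomial.aeval_pi_apply]
      simp [Finset.prod_eq_zero_iff, sub_eq_zero]
    rw [this, map_zero, map_zero]

theorem Matrix.isSemisimple_toLinAlgEquiv'_conj_diagonal {F : Type*} [Field F] {n : ℕ}
    (d : Fin n → F) (g : GL (Fin n) F) :
    Module.End.IsSemisimple (toLinAlgEquiv' ((g : Matrix (Fin n) (Fin n) F) * diagonal d *
      ((g⁻¹ : GL (Fin n) F) : Matrix (Fin n) (Fin n) F))) := by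
  refine (LinearEquiv.isSemisimple_iff _ _ (LinearMap.GeneralLinearGroup.generalLinearEquiv F _
    (GeneralLinearGroup.toLin g)) ?_).1 (isSemisimple_toLinAlgEquiv'_diagonal d)
  refine LinearMap.ext fun x => ?_
  change (g : Matrix (Fin n) (Fin n) F) *ᵥ (diagonal d *ᵥ x) =
    ((g : Matrix (Fin n) (Fin n) F) * diagonal d * _) *ᵥ ((g : Matrix (Fin n) (Fin n) F) *ᵥ x)
  rw [mulVec_mulVec, mulVec_mulVec, mul_assoc _ _ (g : Matrix (Fin n) (Fin n) F), Units.inv_mul,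
    mul_one]

/-- Uniqueness of the diagonalizable part in a Jordan decomposition of matrices. -/
theorem eq_of_diagonalizable_add_nilpotent_eq {F : Type*} [Field F] [CharZero F] {n : ℕ}
    {d d' : Fin n → F} {g g' : GL (Fin n) F} {A A' N N' : Matrix (Fin n) (Fin n) F}
    (hA : A = (g : Matrix (Fin n) (Fin n) F) * Matrix.diagonal d *
      ((g⁻¹ : GL (Fin n) F) : Matrix (Fin n) (Fin n) F))
    (hA' : A' = (g' : Matrix (Fin n) (Fin n) F) * Matrix.diagonal d' *
      ((g'⁻¹ : GL (Fin n) F) : Matrix (Fin n) (Fin n) F))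
    (hN : IsNilpotent N) (hN' : IsNilpotent N') (hc : Commute N A) (hc' : Commute N' A')
    (h : N + A = N' + A') : A = A' := by
  have := Module.End.isNilpotent_isSemisimple_unique
    (hN.map Matrix.toLinAlgEquiv') (hA ▸ Matrix.isSemisimple_toLinAlgEquiv'_conj_diagonal d g)
    (hN'.map Matrix.toLinAlgEquiv') (hA' ▸ Matrix.isSemisimple_toLinAlgEquiv'_conj_diagonal d' g')
    (hc.map Matrix.toLinAlgEquiv') (hc'.map Matrix.toLinAlgEquiv')
    (by rw [← map_add, h, map_add])
  exact Matrix.toLinAlgEquiv'.injective this.2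

theorem Polynomial.isNilpotent_aeval_add_of_commute {R A : Type*} [CommRing R] [Ring A]
    [Algebra R A] {a x : A} (hc : Commute x a) (hx : IsNilpotent x) {q : R[X]}
    (hq : aeval a q = 0) : IsNilpotent (aeval (a + x) q) := by
  have hcomm (p : R[X]) : Commute x (aeval a p) := by
    induction p using Polynomial.induction_on' with
    | add p r hp hr => simpa using hp.add_right hr
    | monomial k r =>
      rw [aeval_monomial]
      exact (Algebra.commute_algebraMap_right r x).mul_right (hc.pow_right k)
  have key (p : R[X]) : ∃ c, Commute x c ∧ aeval (a + x) p = aeval a p + x * c := by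
    induction p using Polynomial.induction_on with
    | C r => exact ⟨0, .zero_right x, by simp⟩
    | add p r hp hr =>
      obtain ⟨c, hc₁, hc₂⟩ := hp
      obtain ⟨c', hc₁', hc₂'⟩ := hr
      exact ⟨c + c', hc₁.add_right hc₁', by rw [map_add, map_add, hc₂, hc₂']; noncomm_ring⟩
    | monomial k r h =>
      obtain ⟨c, hc₁, hc₂⟩ := h
      refine ⟨c * a + c * x + aeval a (C r * X ^ k), ((hc₁.mul_right hc).add_right
        (hc₁.mul_right (.refl x))).add_right (hcomm _), ?_⟩
      rw [pow_succ, ← mul_assoc, map_mul, hc₂, map_mul _ _ X, aeval_X, aeval_X, mul_add x,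
        (hcomm _).eq]
      noncomm_ring
  obtain ⟨c, hxc, hqc⟩ := key q
  rw [hqc, hq, zero_add]
  exact hxc.isNilpotent_mul_right hx

theorem isNilpotent_conj {R : Type*} [MonoidWithZero R] (u : Rˣ) {x : R} (hx : IsNilpotent x) :
    IsNilpotent (u * x * ((u⁻¹ : Rˣ) : R)) := by
  obtain ⟨k, hk⟩ := hx
  exact ⟨k, by rw [Units.conj_pow, hk, mul_zero, zero_mul]⟩

theorem commute_conj {R : Type*} [Monoid R] (u : Rˣ) {x y : R} (h : Commute x y) :
    Commute (u * x * ((u⁻¹ : Rˣ) : R)) (u * y * ((u⁻¹ : Rˣ) : R)) := by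
  simp only [Commute, SemiconjBy, mul_assoc, Units.inv_mul_cancel_left]
  rw [← mul_assoc x, h.eq, mul_assoc]

theorem conj_mem_closure_conjOrbit {F : Type*} [NontriviallyNormedField F] {n : ℕ}
    (g : GL (Fin n) F) {X Y : Matrix (Fin n) (Fin n) F} (h : Y ∈ closure (conjOrbit X)) :
    (g : Matrix (Fin n) (Fin n) F) * Y * ((g⁻¹ : GL (Fin n) F) : Matrix (Fin n) (Fin n) F) ∈
      closure (conjOrbit X) := by
  refine map_mem_closure (f := fun Z => (g : Matrix (Fin n) (Fin n) F) * Z *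
    ((g⁻¹ : GL (Fin n) F) : Matrix (Fin n) (Fin n) F)) (by fun_prop) h ?_
  rintro _ ⟨h, rfl⟩
  exact ⟨g * h, by simp [mul_assoc]⟩

theorem Polynomial.exists_perm_of_prod_X_sub_C_eq {R ι : Type*} [CommRing R] [IsDomain R]
    [Fintype ι] {d d' : ι → R} (h : ∏ i, (X - C (d' i)) = ∏ i, (X - C (d i))) :
    ∃ σ : Equiv.Perm ι, d' = d ∘ σ := by
  classical
  have h' := congrArg roots h
  have hroots (f : ι → R) : (∏ i, (X - C (f i))).roots = Finset.univ.val.map f := by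
    rw [← roots_multiset_prod_X_sub_C (Finset.univ.val.map f), Multiset.map_map]
    rfl
  rw [hroots, hroots] at h'
  have hcard (c : R) : Nonempty ({i // d' i = c} ≃ {i // d i = c}) := by
    have hc := congrArg (Multiset.count c) h'
    rw [Multiset.count_map, Multiset.count_map] at hc
    refine Fintype.card_eq.1 ?_
    rw [Fintype.card_subtype, Fintype.card_subtype]
    simp only [eq_comm (a := c)] at hc
    exact hc
  exact ⟨Equiv.ofFiberEquiv fun c => (hcard c).some,
    _root_.funext fun i => (Equiv.ofFiberEquiv_map _ i).symm⟩

theorem exists_conj_diagonal_comp_perm {F : Type*} [Field F] {n : ℕ} (σ : Equiv.Perm (Fin n))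
    (d : Fin n → F) : ∃ g : GL (Fin n) F, Matrix.diagonal d =
      (g : Matrix (Fin n) (Fin n) F) * Matrix.diagonal (d ∘ σ) *
        ((g⁻¹ : GL (Fin n) F) : Matrix (Fin n) (Fin n) F) := by
  refine ⟨⟨σ⁻¹.permMatrix F, σ.permMatrix F, ?_, ?_⟩, ?_⟩
  · rw [← Matrix.permMatrix_mul, mul_inv_cancel, Matrix.permMatrix_one]
  · rw [← Matrix.permMatrix_mul, inv_mul_cancel, Matrix.permMatrix_one]
  · change _ = σ⁻¹.permMatrix F * _ * σ.permMatrix F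
    rw [Equiv.Perm.permMatrix, Equiv.Perm.permMatrix, PEquiv.toMatrix_toPEquiv_mul,
      PEquiv.mul_toMatrix_toPEquiv, Matrix.submatrix_submatrix]
    change _ = (Matrix.diagonal (d ∘ σ)).submatrix σ.symm σ.symm
    rw [Matrix.submatrix_diagonal_equiv]
    simp [Function.comp_def]

/-- Let `γ` be diagonalizable over `F`, with centralizer `M` in `GL_n(F)`.  The map
`ξ ↦ (γ + ξ)^{GL_n(F)}` induces a bijection from the set of `M`-conjugacy classes of
nilpotent elements of the centralizer algebra of `γ` onto the set of `GL_n(F)`-orbits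
whose closure contains `γ`; in particular the latter set is finite. -/
theorem stmt_12 {F : Type*} [NontriviallyNormedField F] [CharZero F] {n : ℕ}
    (γ : Matrix (Fin n) (Fin n) F)
    (hdiag : ∃ P : GL (Fin n) F, ∃ d : Fin n → F,
      γ = (P : Matrix (Fin n) (Fin n) F) * Matrix.diagonal d *
        ((P⁻¹ : GL (Fin n) F) : Matrix (Fin n) (Fin n) F)) :
    -- the map is well defined: `γ` lies in the closure of the orbit of `γ + ξ`
    (∀ ξ : Matrix (Fin n) (Fin n) F, IsNilpotent ξ → ξ * γ = γ * ξ →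
      γ ∈ closure (conjOrbit (γ + ξ))) ∧
    -- the map is injective on `M`-classes: orbits agree iff `ξ, ξ'` are `M`-conjugate
    (∀ ξ ξ' : Matrix (Fin n) (Fin n) F, IsNilpotent ξ → IsNilpotent ξ' →
      ξ * γ = γ * ξ → ξ' * γ = γ * ξ' →
      (conjOrbit (γ + ξ) = conjOrbit (γ + ξ') ↔
        ∃ m : GL (Fin n) F,
          (m : Matrix (Fin n) (Fin n) F) * γ = γ * (m : Matrix (Fin n) (Fin n) F) ∧
          ξ' = (m : Matrix (Fin n) (Fin n) F) * ξ *
            ((m⁻¹ : GL (Fin n) F) : Matrix (Fin n) (Fin n) F))) ∧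
    -- the map is surjective: every orbit whose closure contains `γ` is of this form
    (∀ X : Matrix (Fin n) (Fin n) F, γ ∈ closure (conjOrbit X) →
      ∃ ξ : Matrix (Fin n) (Fin n) F, IsNilpotent ξ ∧ ξ * γ = γ * ξ ∧
        conjOrbit X = conjOrbit (γ + ξ)) ∧
    -- in particular, the set of such orbits is finite
    {O : Set (Matrix (Fin n) (Fin n) F) |
      (∃ X, O = conjOrbit X) ∧ γ ∈ closure O}.Finite := by
  obtain ⟨P, d, hγ⟩ := hdiag
  have hchar : γ.charpoly = ∏ i, (X - C (d i)) := by
    rw [hγ, Matrix.coe_units_inv, Matrix.charpoly_units_conj, Matrix.charpoly_diagonal]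
  have hne : γ.charpoly ≠ 0 := γ.charpoly_monic.ne_zero
  have hsplit : γ.charpoly.Splits := by
    rw [hchar]
    exact Splits.prod fun i _ => Splits.X_sub_C _
  have hwell : ∀ ξ : Matrix (Fin n) (Fin n) F, IsNilpotent ξ → ξ * γ = γ * ξ →
      γ ∈ closure (conjOrbit (γ + ξ)) := by
    intro ξ hξ hc
    obtain ⟨k, hk⟩ := isNilpotent_aeval_add_of_commute hc hξ γ.aeval_self_charpoly
    rw [← map_pow] at hk
    obtain ⟨g, d', N, w, hX, -, hN⟩ := Matrix.exists_conj_diagonal_add_of_splits (γ + ξ)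
      (pow_ne_zero k hne) (hsplit.pow k) hk
    have hNw := fun i j h => (hN i j h).1
    have hNc := commute_diagonal_of_forall_eq d' N fun i j h => (hN i j h).2
    have hγ' : γ = (g : Matrix (Fin n) (Fin n) F) * Matrix.diagonal d' *
        ((g⁻¹ : GL (Fin n) F) : Matrix (Fin n) (Fin n) F) := by
      refine eq_of_diagonalizable_add_nilpotent_eq hγ rfl hξ
        (isNilpotent_conj g (isNilpotent_of_weight_raising N w hNw)) hc (commute_conj g hNc) ?_
      rw [add_comm ξ, hX, mul_add, add_mul, add_comm]
    rw [hX, conjOrbit_conj, hγ']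
    exact conj_mem_closure_conjOrbit g (diagonal_mem_closure_conjOrbit d' N w hNw)
  have hsurj : ∀ X : Matrix (Fin n) (Fin n) F, γ ∈ closure (conjOrbit X) →
      ∃ (σ : Equiv.Perm (Fin n)) (N : Matrix (Fin n) (Fin n) F),
        (∀ i j, N i j = 0 ∨ N i j = 1) ∧ IsNilpotent N ∧ Commute N (Matrix.diagonal (d ∘ σ)) ∧
        conjOrbit X = conjOrbit (Matrix.diagonal (d ∘ σ) + N) := by
    intro X hX
    have hXγ := charpoly_eq_of_mem_closure_conjOrbit hX
    obtain ⟨g, d', N, w, hXN, hN01, hN⟩ := Matrix.exists_conj_diagonal_add_of_splits X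
      hne hsplit (hXγ ▸ X.aeval_self_charpoly)
    have hNw := fun i j h => (hN i j h).1
    have hprod : ∏ i, (Polynomial.X - C (d' i)) = ∏ i, (Polynomial.X - C (d i)) := by
      rw [← hchar, hXγ, hXN, Matrix.coe_units_inv, Matrix.charpoly_units_conj,
        ← charpoly_eq_of_mem_closure_conjOrbit (diagonal_mem_closure_conjOrbit d' N w hNw),
        Matrix.charpoly_diagonal]
    obtain ⟨σ, rfl⟩ := exists_perm_of_prod_X_sub_C_eq hprod
    exact ⟨σ, N, hN01, isNilpotent_of_weight_raising N w hNw,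
      commute_diagonal_of_forall_eq _ N fun i j h => (hN i j h).2, by rw [hXN, conjOrbit_conj]⟩
  refine ⟨hwell, fun ξ ξ' hξ hξ' hc hc' => ⟨fun h => ?_, ?_⟩, fun X hX => ?_, ?_⟩
  · obtain ⟨m, hm⟩ : γ + ξ' ∈ conjOrbit (γ + ξ) := h ▸ mem_conjOrbit_self _
    rw [mul_add, add_mul] at hm
    have hγm : γ = (m : Matrix (Fin n) (Fin n) F) * γ *
        ((m⁻¹ : GL (Fin n) F) : Matrix (Fin n) (Fin n) F) := by
      refine eq_of_diagonalizable_add_nilpotent_eq (g' := m * P) (d' := d) hγ ?_ hξ'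
        (isNilpotent_conj m hξ) hc' (commute_conj m hc) ?_
      · rw [hγ]
        simp [mul_assoc]
      · rw [add_comm ξ', hm, add_comm]
    refine ⟨m, ?_, ?_⟩
    · conv_rhs => rw [hγm]
      rw [mul_assoc _ _ (m : Matrix (Fin n) (Fin n) F), Units.inv_mul, mul_one]
    · rw [← hγm] at hm
      exact add_left_cancel hm
  · rintro ⟨m, hm, rfl⟩
    have : γ + (m : Matrix (Fin n) (Fin n) F) * ξ *
        ((m⁻¹ : GL (Fin n) F) : Matrix (Fin n) (Fin n) F) =
        (m : Matrix (Fin n) (Fin n) F) * (γ + ξ) *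
        ((m⁻¹ : GL (Fin n) F) : Matrix (Fin n) (Fin n) F) := by
      rw [mul_add, add_mul, hm, mul_assoc γ, Units.mul_inv, mul_one]
    rw [this, conjOrbit_conj]
  · obtain ⟨σ, N, -, hN, hc, h⟩ := hsurj X hX
    obtain ⟨h', hh'⟩ := exists_conj_diagonal_comp_perm σ d
    have hγ' : γ = ((P * h' : GL (Fin n) F) : Matrix (Fin n) (Fin n) F) *
        Matrix.diagonal (d ∘ σ) *
        (((P * h')⁻¹ : GL (Fin n) F) : Matrix (Fin n) (Fin n) F) := by
      rw [hγ, hh']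
      simp [mul_assoc]
    refine ⟨_, isNilpotent_conj (P * h') hN, ?_, ?_⟩
    · rw [hγ']
      exact commute_conj (P * h') hc
    · rw [h, hγ', ← add_mul, ← mul_add, conjOrbit_conj]
  · have hfin : {N : Matrix (Fin n) (Fin n) F | ∀ i j, N i j ∈ ({0, 1} : Set F)}.Finite :=
      Set.Finite.pi' fun _ => Set.Finite.pi' fun _ => Set.toFinite _
    refine (((Set.finite_univ (α := Equiv.Perm (Fin n))).prod hfin).image
      fun x => conjOrbit (Matrix.diagonal (d ∘ x.1) + x.2)).subset ?_
    rintro _ ⟨⟨X, rfl⟩, hX⟩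
    obtain ⟨σ, N, hN, -, -, h⟩ := hsurj X hX
    exact ⟨(σ, N), ⟨Set.mem_univ _, fun i j => hN i j⟩, h.symm⟩
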